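/- (Unsolvability of constrained problems transfers to more concrete models.) Let M be a STRIPS planning model over fluents F and labels A, let P ⊆ F, and let L be any set of plans (a set of lists over A, representing a plan constraint). Then Π_M ∩ L ⊆ Π_{f_P(M)} ∩ L; in particular, if the constrained abstract problem has no valid plan (Π_{f_P(M)} ∩ L = ∅), then the constrained concrete problem has no valid plan (Π_M ∩ L = ∅). -/

import Mathlib

/-- A STRIPS planning model over fluents `F` and action labels `A`. -/
structure Strips (F : Type*) (A : Type*) where
  prec : A → Set F
  add : A → Set F
  del : A → Set F
  I : Set F
  G : Set F

/-- Result of applying action `a` in state `S`. -/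
def Strips.res {F A : Type*} (M : Strips F A) (a : A) (S : Set F) : Set F :=
  (S \ M.del a) ∪ M.add a

/-- The state trajectory `S₀, S₁, …, Sₙ` of a plan from a state. -/
def Strips.traj {F A : Type*} (M : Strips F A) : List A → Set F → List (Set F)
  | [], S => [S]
  | a :: π, S => S :: M.traj π (M.res a S)

/-- A plan is executable from `S` if each action's precondition holds when applied. -/
def Strips.exec {F A : Type*} (M : Strips F A) : List A → Set F → Prop
  | [], _ => True
  | a :: π, S => M.prec a ⊆ S ∧ M.exec π (M.res a S)

/-- The final state `Sₙ` of the trajectory of a plan from a state. -/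
def Strips.finalState {F A : Type*} (M : Strips F A) (π : List A) (S : Set F) : Set F :=
  π.foldl (fun T a => M.res a T) S

/-- The state `S_k` of the trajectory of a plan from a state. -/
def Strips.stateAt {F A : Type*} (M : Strips F A) (π : List A) (S : Set F) (k : ℕ) : Set F :=
  M.finalState (π.take k) S

/-- A plan is valid if it is executable from the initial state and achieves the goal. -/
def Strips.Valid {F A : Type*} (M : Strips F A) (π : List A) : Prop :=
  M.exec π M.I ∧ M.G ⊆ M.finalState π M.I

/-- The set `Π_M` of valid plans of `M`. -/
def Strips.Plans {F A : Type*} (M : Strips F A) : Set (List A) :=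
  {π | M.Valid π}

/-- The projection `f_P(M)` of a model, projecting out the fluents in `P`. -/
def Strips.proj {F A : Type*} (M : Strips F A) (P : Set F) : Strips F A where
  prec a := M.prec a \ P
  add a := M.add a \ P
  del a := M.del a \ P
  I := M.I \ P
  G := M.G \ P

/-! Projection commutes with every operation of the state semantics: removing `P` from a state and
then acting in `f_P(M)` is the same as acting in `M` and then removing `P`. So the trajectory of a
plan in `f_P(M)` is the projection of its trajectory in `M`, and the inclusions that make a plan
valid (preconditions and goal) survive removing `P` from both sides. -/

namespace Strips

variable {F A : Type*} (M : Strips F A) (P : Set F)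

theorem proj_res_sdiff (a : A) (S : Set F) : (M.proj P).res a (S \ P) = M.res a S \ P := by
  ext x
  simp only [res, proj, Set.mem_union, Set.mem_sdiff]
  tauto

theorem proj_finalState_sdiff (π : List A) (S : Set F) :
    (M.proj P).finalState π (S \ P) = M.finalState π S \ P :=
  List.foldl_hom (· \ P) fun S a => M.proj_res_sdiff P a S

variable {M}

theorem exec.proj_sdiff {π : List A} {S : Set F} (h : M.exec π S) :
    (M.proj P).exec π (S \ P) := by
  induction π generalizing S with
  | nil => trivial
  | cons a π ih =>
    obtain ⟨hprec, hexec⟩ := h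
    refine ⟨Set.sdiff_subset_sdiff_left hprec, ?_⟩
    rw [proj_res_sdiff]
    exact ih hexec

theorem Valid.proj {π : List A} (h : M.Valid π) : (M.proj P).Valid π := by
  obtain ⟨hexec, hgoal⟩ := h
  refine ⟨hexec.proj_sdiff P, ?_⟩
  calc M.G \ P ⊆ M.finalState π M.I \ P := Set.sdiff_subset_sdiff_left hgoal
    _ = (M.proj P).finalState π (M.I \ P) := (M.proj_finalState_sdiff P π M.I).symm

variable (M) in
theorem plans_subset_plans_proj : M.Plans ⊆ (M.proj P).Plans :=
  fun _ => Valid.proj P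

end Strips

theorem stmt14 {F A : Type*} (M : Strips F A) (P : Set F) (L : Set (List A)) :
    M.Plans ∩ L ⊆ (M.proj P).Plans ∩ L ∧
    ((M.proj P).Plans ∩ L = ∅ → M.Plans ∩ L = ∅) := by
  have plans_subset : M.Plans ∩ L ⊆ (M.proj P).Plans ∩ L :=
    Set.inter_subset_inter_left L (M.plans_subset_plans_proj P)
  exact ⟨plans_subset, Set.subset_eq_empty plans_subset⟩
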